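/- arXiv:2206.01558 — 10 statements merged into one kernel-verified Lean document; each statement's English description precedes it below -/
import Mathlib

section
/- Let f : ℝ^D → ℝ^H be piecewise affine with respect to a finite cover of ℝ^D by convex sets Q_1, …, Q_R, meaning ⋃_l Q_l = ℝ^D and for each l there are a linear map V_l : ℝ^D → ℝ^H and a vector a_l ∈ ℝ^H with f(x) = V_l x + a_l for all x ∈ Q_l. Then for every x ∈ ℝ^D there exist δ* > 0, a linear map V : ℝ^D → ℝ^H, and a vector a ∈ ℝ^H such that f(δ·x) = δ·(V x) + a for all δ > δ*. -/
/-- A piecewise affine map (w.r.t. a finite convex cover of `ℝ^D`) agrees, along any ray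
`δ • x`, eventually with a single affine map of the ray parameter. -/
theorem piecewise_affine_ray_eventually_affine
    (D H R : ℕ)
    (Q : Fin R → Set (EuclideanSpace ℝ (Fin D)))
    (V : Fin R → (EuclideanSpace ℝ (Fin D) →ₗ[ℝ] EuclideanSpace ℝ (Fin H)))
    (a : Fin R → EuclideanSpace ℝ (Fin H))
    (f : EuclideanSpace ℝ (Fin D) → EuclideanSpace ℝ (Fin H))
    (hconv : ∀ l, Convex ℝ (Q l))
    (hcover : (⋃ l, Q l) = Set.univ)
    (hf : ∀ l, ∀ x ∈ Q l, f x = V l x + a l) :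
    ∀ x : EuclideanSpace ℝ (Fin D),
      ∃ δstar : ℝ, 0 < δstar ∧
        ∃ (W : EuclideanSpace ℝ (Fin D) →ₗ[ℝ] EuclideanSpace ℝ (Fin H))
          (b : EuclideanSpace ℝ (Fin H)),
          ∀ δ : ℝ, δstar < δ → f (δ • x) = δ • (W x) + b := by
  intro x
  have hex : ∃ l, ∃ᶠ δ : ℝ in Filter.atTop, δ • x ∈ Q l := by
    by_contra hcon
    have h1 : ∀ l, ∀ᶠ δ : ℝ in Filter.atTop, ¬ (δ • x ∈ Q l) := fun l =>
      Filter.not_frequently.mp (fun h => hcon ⟨l, h⟩)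
    obtain ⟨δ, hδ⟩ := (Filter.eventually_all.mpr h1).exists
    have hm : δ • x ∈ ⋃ l, Q l := by rw [hcover]; trivial
    obtain ⟨l, hl⟩ := Set.mem_iUnion.mp hm
    exact hδ l hl
  obtain ⟨l, hl⟩ := hex
  have hC : Convex ℝ {δ : ℝ | δ • x ∈ Q l} :=
    (hconv l).linear_preimage (LinearMap.toSpanSingleton ℝ _ x)
  rw [Filter.frequently_atTop] at hl
  obtain ⟨d, hd1, hd⟩ := hl 1
  refine ⟨d, by linarith, V l, a l, fun δ hδ => ?_⟩
  obtain ⟨e, he1, he⟩ := hl δ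
  have hmem : δ • x ∈ Q l := hC.ordConnected.out hd he ⟨hδ.le, he1⟩
  rw [hf l _ hmem, map_smul]
end

section
/- Let f : ℝ^D → ℝ^H be piecewise affine with respect to a finite cover of ℝ^D by convex sets Q_1, …, Q_R, with affine pieces f(x) = V_l x + a_l on Q_l. Let x ∈ ℝ^D be such that V_l x ≠ 0 for every l ∈ {1, …, R}. Then ‖f(δ·x)‖ → ∞ as δ → ∞. -/
open Filter

/-- Lemma A.2: for a piecewise affine map `f` (w.r.t. a finite convex cover of `ℝ^D`)
and any `x` with `V l x ≠ 0` for every piece `l`, the latent norm `‖f (δ • x)‖`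
tends to infinity as `δ → ∞`. -/
theorem piecewise_affine_norm_tendsto_atTop
    (D H R : ℕ)
    (Q : Fin R → Set (EuclideanSpace ℝ (Fin D)))
    (V : Fin R → (EuclideanSpace ℝ (Fin D) →ₗ[ℝ] EuclideanSpace ℝ (Fin H)))
    (a : Fin R → EuclideanSpace ℝ (Fin H))
    (f : EuclideanSpace ℝ (Fin D) → EuclideanSpace ℝ (Fin H))
    (hconv : ∀ l, Convex ℝ (Q l))
    (hcover : (⋃ l, Q l) = Set.univ)
    (hf : ∀ l, ∀ x ∈ Q l, f x = V l x + a l)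
    (x : EuclideanSpace ℝ (Fin D))
    (hx : ∀ l, V l x ≠ 0) :
    Tendsto (fun δ : ℝ => ‖f (δ • x)‖) atTop atTop := by
  rw [tendsto_atTop]
  intro b
  have key : ∀ l, ∀ᶠ δ : ℝ in atTop, b ≤ ‖V l (δ • x) + a l‖ := by
    intro l
    have hpos : 0 < ‖V l x‖ := norm_pos_iff.mpr (hx l)
    filter_upwards [eventually_ge_atTop ((b + ‖a l‖) / ‖V l x‖), eventually_ge_atTop 0] with δ h1 h2
    rw [div_le_iff₀ hpos] at h1
    have h3 : ‖V l (δ • x)‖ = δ * ‖V l x‖ := by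
      rw [map_smul, norm_smul, Real.norm_of_nonneg h2]
    have h4 := norm_sub_le (V l (δ • x) + a l) (a l)
    rw [add_sub_cancel_right] at h4
    linarith
  filter_upwards [eventually_all.mpr key] with δ h
  have hm : δ • x ∈ ⋃ l, Q l := by rw [hcover]; trivial
  obtain ⟨l, hl⟩ := Set.mem_iUnion.mp hm
  rw [hf l _ hl]
  exact h l
end

section
/- Let f : ℝ^D → ℝ^H be piecewise affine with respect to a finite cover of ℝ^D by convex sets Q_1, …, Q_R, with affine pieces f(x) = V_l x + a_l on Q_l, and suppose V_l ≠ 0 for every l. Then the set of x ∈ ℝ^D for which ‖f(δ·x)‖ does not tend to ∞ as δ → ∞ is contained in the finite union of the kernels ⋃_{l=1}^R ker V_l, each of which is a proper linear subspace of ℝ^D; in particular this exceptional set has Lebesgue measure zero. -/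
open Filter MeasureTheory

/-- The exceptional set of Lemma A.2: the set of `x` for which `‖f (δ • x)‖` does not
tend to infinity is contained in the finite union of the kernels `ker (V l)`, each a
proper linear subspace; in particular it has Lebesgue measure zero. -/
theorem piecewise_affine_exceptional_set_measure_zero
    (D H R : ℕ)
    (Q : Fin R → Set (EuclideanSpace ℝ (Fin D)))
    (V : Fin R → (EuclideanSpace ℝ (Fin D) →ₗ[ℝ] EuclideanSpace ℝ (Fin H)))
    (a : Fin R → EuclideanSpace ℝ (Fin H))
    (f : EuclideanSpace ℝ (Fin D) → EuclideanSpace ℝ (Fin H))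
    (hconv : ∀ l, Convex ℝ (Q l))
    (hcover : (⋃ l, Q l) = Set.univ)
    (hf : ∀ l, ∀ x ∈ Q l, f x = V l x + a l)
    (hV : ∀ l, V l ≠ 0) :
    {x : EuclideanSpace ℝ (Fin D) |
        ¬ Tendsto (fun δ : ℝ => ‖f (δ • x)‖) atTop atTop}
      ⊆ (⋃ l, (LinearMap.ker (V l) : Set (EuclideanSpace ℝ (Fin D)))) ∧
    (∀ l, (LinearMap.ker (V l) : Set (EuclideanSpace ℝ (Fin D))) ≠ Set.univ) ∧
    volume {x : EuclideanSpace ℝ (Fin D) |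
        ¬ Tendsto (fun δ : ℝ => ‖f (δ • x)‖) atTop atTop} = 0 := by
  have h1 : {x : EuclideanSpace ℝ (Fin D) |
        ¬ Tendsto (fun δ : ℝ => ‖f (δ • x)‖) atTop atTop}
      ⊆ (⋃ l, (LinearMap.ker (V l) : Set (EuclideanSpace ℝ (Fin D)))) := by
    intro x hx
    by_contra hn
    apply hx
    have hn' : ∀ l, V l x ≠ 0 := by
      intro l h
      exact hn (Set.mem_iUnion.2 ⟨l, h⟩)
    rw [tendsto_atTop]
    intro B
    have key : ∀ l, ∀ᶠ δ : ℝ in atTop, B ≤ δ * ‖V l x‖ - ‖a l‖ := by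
      intro l
      have hpos : 0 < ‖V l x‖ := norm_pos_iff.2 (hn' l)
      filter_upwards [eventually_ge_atTop ((B + ‖a l‖) / ‖V l x‖)] with δ hδ
      rw [div_le_iff₀ hpos] at hδ
      linarith
    filter_upwards [eventually_all.2 key, eventually_ge_atTop (0 : ℝ)] with δ hδ h0
    have hm : δ • x ∈ ⋃ l, Q l := by rw [hcover]; trivial
    obtain ⟨l, hl⟩ := Set.mem_iUnion.1 hm
    rw [hf l _ hl, map_smul]
    have h2 := norm_sub_le_norm_add (δ • V l x) (a l)
    rw [norm_smul, Real.norm_of_nonneg h0] at h2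
    linarith [hδ l]
  have h2 : ∀ l, LinearMap.ker (V l) ≠ ⊤ := fun l h => hV l (LinearMap.ker_eq_top.1 h)
  refine ⟨h1, fun l h => h2 l (SetLike.coe_injective (by simpa using h)), ?_⟩
  exact measure_mono_null h1 (measure_iUnion_null fun l => Measure.addHaar_submodule _ _ (h2 l))
end

section
/- Let f : ℝ^D → ℝ^H be piecewise affine with respect to a finite cover of ℝ^D by convex sets Q_1, …, Q_R, with affine pieces f(x) = V_l x + a_l on Q_l, and let x ∈ ℝ^D satisfy V_l x ≠ 0 for every l. Then for every fixed φ ∈ ℝ^H and every ℓ > 0, the RBF kernel evaluation exp(−‖f(δ·x) − φ‖² / (2ℓ²)) tends to 0 as δ → ∞. -/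
open Filter

/-- The RBF kernel similarity between `f (δ • x)` and any fixed inducing point `φ`
vanishes as `δ → ∞`, for a piecewise affine encoder `f` and `x` with `V l x ≠ 0` for
every piece `l`. -/
theorem rbf_kernel_tendsto_zero_along_ray
    (D H R : ℕ)
    (Q : Fin R → Set (EuclideanSpace ℝ (Fin D)))
    (V : Fin R → (EuclideanSpace ℝ (Fin D) →ₗ[ℝ] EuclideanSpace ℝ (Fin H)))
    (a : Fin R → EuclideanSpace ℝ (Fin H))
    (f : EuclideanSpace ℝ (Fin D) → EuclideanSpace ℝ (Fin H))
    (hconv : ∀ l, Convex ℝ (Q l))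
    (hcover : (⋃ l, Q l) = Set.univ)
    (hf : ∀ l, ∀ x ∈ Q l, f x = V l x + a l)
    (x : EuclideanSpace ℝ (Fin D))
    (hx : ∀ l, V l x ≠ 0)
    (φ : EuclideanSpace ℝ (Fin H)) (ℓ : ℝ) (hℓ : 0 < ℓ) :
    Tendsto (fun δ : ℝ => Real.exp (-‖f (δ • x) - φ‖ ^ 2 / (2 * ℓ ^ 2)))
      atTop (nhds 0) := by
  have hN : Tendsto (fun δ : ℝ => ‖f (δ • x) - φ‖) atTop atTop := by
    rw [tendsto_atTop]
    intro C
    have h1 : ∀ l, ∀ᶠ δ : ℝ in atTop, C + ‖a l - φ‖ ≤ δ * ‖V l x‖ := fun l =>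
      (tendsto_id.atTop_mul_const (norm_pos_iff.mpr (hx l))).eventually_ge_atTop _
    filter_upwards [eventually_all.mpr h1, eventually_ge_atTop 0] with δ h hδ
    obtain ⟨l, hl⟩ := Set.mem_iUnion.mp (hcover ▸ Set.mem_univ (δ • x))
    have h2 : f (δ • x) - φ = δ • V l x + (a l - φ) := by
      rw [hf l _ hl, map_smul]; abel
    have h3 : ‖δ • V l x‖ = δ * ‖V l x‖ := by
      rw [norm_smul, Real.norm_of_nonneg hδ]
    have h4 := norm_sub_le (δ • V l x + (a l - φ)) (a l - φ)
    rw [add_sub_cancel_right, h3] at h4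
    rw [h2]
    linarith [h l]
  apply Real.tendsto_exp_atBot.comp
  have h5 : Tendsto (fun δ : ℝ => ‖f (δ • x) - φ‖ ^ 2 / (2 * ℓ ^ 2)) atTop atTop :=
    ((tendsto_pow_atTop two_ne_zero).comp hN).atTop_div_const (by positivity)
  simp only [neg_div]
  exact tendsto_neg_atTop_atBot.comp h5
end

section
/- Let g : ℝ → ℝ satisfy g(r) → 0 as r → ∞, and define a stationary kernel on ℝ^H by κ(u, v) = g(‖u − v‖). Fix inducing points φ_1, …, φ_K ∈ ℝ^H and a matrix C ∈ ℝ^{K×K}, and define the predictive variance σ(z) = g(0) − Σ_{k,k'=1}^K κ(z, φ_k) · C_{k k'} · κ(z, φ_{k'}) for z ∈ ℝ^H. Then for any sequence (or filter) of points z with ‖z‖ → ∞, we have σ(z) → g(0) = κ(0, 0). -/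
open Filter

/-- For a stationary kernel `κ u v = g ‖u - v‖` whose profile `g` vanishes at infinity,
the GP predictive variance `σ z = κ 0 0 - ∑ k k', κ z (φ k) * C k k' * κ z (φ k')`
tends to the prior variance `κ 0 0 = g 0` as `‖z‖ → ∞`. -/
theorem predictive_variance_tendsto_prior
    (H K : ℕ)
    (g : ℝ → ℝ) (hg : Tendsto g atTop (nhds 0))
    (κ : EuclideanSpace ℝ (Fin H) → EuclideanSpace ℝ (Fin H) → ℝ)
    (hκ : ∀ u v, κ u v = g ‖u - v‖)
    (φ : Fin K → EuclideanSpace ℝ (Fin H))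
    (C : Matrix (Fin K) (Fin K) ℝ)
    (σ : EuclideanSpace ℝ (Fin H) → ℝ)
    (hσ : ∀ z, σ z = g 0 - ∑ k : Fin K, ∑ k' : Fin K, κ z (φ k) * C k k' * κ z (φ k')) :
    Tendsto σ (comap norm atTop) (nhds (g 0)) ∧ g 0 = κ 0 0 := by
  refine ⟨?_, by simp [hκ]⟩
  have h1 : ∀ k, Tendsto (fun z => κ z (φ k)) (comap norm atTop) (nhds 0) := by
    intro k
    simp only [hκ]
    refine hg.comp ?_
    refine tendsto_atTop_mono (fun z => norm_sub_norm_le z (φ k)) ?_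
    exact tendsto_atTop_add_const_right _ (-‖φ k‖) tendsto_comap
  have h2 : Tendsto (fun z => g 0 - ∑ k : Fin K, ∑ k' : Fin K, κ z (φ k) * C k k' * κ z (φ k'))
      (comap norm atTop) (nhds (g 0 - ∑ k : Fin K, ∑ k' : Fin K, 0 * C k k' * 0)) :=
    tendsto_const_nhds.sub (tendsto_finsetSum _ fun k _ => tendsto_finsetSum _ fun k' _ =>
      ((h1 k).mul_const _).mul (h1 k'))
  rw [funext hσ]
  simpa using h2
end

section
/- Let f : ℝ^D → ℝ^H be piecewise affine with respect to a finite cover of ℝ^D by convex sets Q_1, …, Q_R, with affine pieces f(x) = V_l x + a_l on Q_l, and let x ∈ ℝ^D satisfy V_l x ≠ 0 for every l. Let ℓ > 0, let κ(u, v) = exp(−‖u − v‖²/(2ℓ²)) be the RBF kernel, fix inducing points φ_1, …, φ_K ∈ ℝ^H and a matrix C ∈ ℝ^{K×K}, and define σ(z) = κ(z, z) − Σ_{k,k'=1}^K κ(z, φ_k) C_{k k'} κ(z, φ_{k'}). Then σ(f(δ·x)) → κ(0, 0) = 1 as δ → ∞. -/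
open Filter

/-- Theorem A.1 for the RBF kernel: the deep kernel learning predictive variance
reverts to the prior variance `κ 0 0 = 1` along rays `δ • x` as `δ → ∞`. -/
theorem dkl_rbf_variance_tendsto_prior
    (D H R K : ℕ)
    (Q : Fin R → Set (EuclideanSpace ℝ (Fin D)))
    (V : Fin R → (EuclideanSpace ℝ (Fin D) →ₗ[ℝ] EuclideanSpace ℝ (Fin H)))
    (a : Fin R → EuclideanSpace ℝ (Fin H))
    (f : EuclideanSpace ℝ (Fin D) → EuclideanSpace ℝ (Fin H))
    (hconv : ∀ l, Convex ℝ (Q l))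
    (hcover : (⋃ l, Q l) = Set.univ)
    (hf : ∀ l, ∀ x ∈ Q l, f x = V l x + a l)
    (x : EuclideanSpace ℝ (Fin D))
    (hx : ∀ l, V l x ≠ 0)
    (ℓ : ℝ) (hℓ : 0 < ℓ)
    (κ : EuclideanSpace ℝ (Fin H) → EuclideanSpace ℝ (Fin H) → ℝ)
    (hκ : ∀ u v, κ u v = Real.exp (-‖u - v‖ ^ 2 / (2 * ℓ ^ 2)))
    (φ : Fin K → EuclideanSpace ℝ (Fin H))
    (C : Matrix (Fin K) (Fin K) ℝ)
    (σ : EuclideanSpace ℝ (Fin H) → ℝ)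
    (hσ : ∀ z, σ z = κ z z - ∑ k : Fin K, ∑ k' : Fin K, κ z (φ k) * C k k' * κ z (φ k')) :
    Tendsto (fun δ : ℝ => σ (f (δ • x))) atTop (nhds (κ 0 0)) ∧ κ 0 0 = 1 := by
  have h1 : ∀ z, κ z z = 1 := fun z => by simp [hκ]
  have hnorm : ∀ v, Tendsto (fun δ : ℝ => ‖f (δ • x) - v‖) atTop atTop := by
    intro v
    have hl : ∀ l, Tendsto (fun δ : ℝ => δ * ‖V l x‖ - ‖a l - v‖) atTop atTop := by
      intro l
      exact tendsto_atTop_add_const_right _ _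
        (tendsto_id.atTop_mul_const (norm_pos_iff.mpr (hx l)))
    rw [tendsto_atTop]
    intro M
    have hall := eventually_all.mpr (fun l => (tendsto_atTop.mp (hl l)) M)
    filter_upwards [hall, eventually_ge_atTop 0] with δ hδ h0
    have hm : δ • x ∈ ⋃ l, Q l := by rw [hcover]; trivial
    obtain ⟨l, hml⟩ := Set.mem_iUnion.mp hm
    rw [hf l _ hml, map_smul]
    have h2 : ‖δ • V l x‖ = δ * ‖V l x‖ := by
      rw [norm_smul, Real.norm_of_nonneg h0]
    have h3 := norm_sub_le (δ • V l x + a l - v) (a l - v)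
    have h4 : δ • V l x + a l - v - (a l - v) = δ • V l x := by abel
    rw [h4, h2] at h3
    linarith [hδ l]
  have hk : ∀ v, Tendsto (fun δ : ℝ => κ (f (δ • x)) v) atTop (nhds 0) := by
    intro v
    simp only [hκ]
    refine Real.tendsto_exp_atBot.comp ?_
    have h5 : (0 : ℝ) < 2 * ℓ ^ 2 := by positivity
    exact (tendsto_neg_atTop_atBot.comp
      ((tendsto_pow_atTop two_ne_zero).comp (hnorm v))).atBot_div_const h5
  refine ⟨?_, h1 0⟩
  simp only [hσ, h1]
  have hs : Tendsto (fun δ : ℝ => ∑ k : Fin K, ∑ k' : Fin K,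
      κ (f (δ • x)) (φ k) * C k k' * κ (f (δ • x)) (φ k')) atTop
      (nhds (∑ k : Fin K, ∑ k' : Fin K, 0 * C k k' * 0)) :=
    tendsto_finsetSum _ fun k _ => tendsto_finsetSum _ fun k' _ =>
      ((hk (φ k)).mul_const (C k k')).mul (hk (φ k'))
  simpa using hs.const_sub 1
end

section
/- Let f : ℝ^D → ℝ^H be piecewise affine with respect to a finite cover of ℝ^D by convex sets Q_1, …, Q_R, with affine pieces f(x) = V_l x + a_l on Q_l, and let x ∈ ℝ^D satisfy V_l x ≠ 0 for every l. Let α > 0, ℓ > 0, let κ(u, v) = (1 + ‖u − v‖²/(2αℓ²))^{−α} be the rational quadratic kernel, fix inducing points φ_1, …, φ_K ∈ ℝ^H and a matrix C ∈ ℝ^{K×K}, and define σ(z) = κ(z, z) − Σ_{k,k'=1}^K κ(z, φ_k) C_{k k'} κ(z, φ_{k'}). Then σ(f(δ·x)) → κ(0, 0) = 1 as δ → ∞. -/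
open Filter

/-- Theorem A.1 for the rational quadratic kernel: the deep kernel learning predictive
variance reverts to the prior variance `κ 0 0 = 1` along rays `δ • x` as `δ → ∞`. -/
theorem dkl_rq_variance_tendsto_prior
    (D H R K : ℕ)
    (Q : Fin R → Set (EuclideanSpace ℝ (Fin D)))
    (V : Fin R → (EuclideanSpace ℝ (Fin D) →ₗ[ℝ] EuclideanSpace ℝ (Fin H)))
    (a : Fin R → EuclideanSpace ℝ (Fin H))
    (f : EuclideanSpace ℝ (Fin D) → EuclideanSpace ℝ (Fin H))
    (hconv : ∀ l, Convex ℝ (Q l))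
    (hcover : (⋃ l, Q l) = Set.univ)
    (hf : ∀ l, ∀ x ∈ Q l, f x = V l x + a l)
    (x : EuclideanSpace ℝ (Fin D))
    (hx : ∀ l, V l x ≠ 0)
    (α ℓ : ℝ) (hα : 0 < α) (hℓ : 0 < ℓ)
    (κ : EuclideanSpace ℝ (Fin H) → EuclideanSpace ℝ (Fin H) → ℝ)
    (hκ : ∀ u v, κ u v = (1 + ‖u - v‖ ^ 2 / (2 * α * ℓ ^ 2)) ^ (-α))
    (φ : Fin K → EuclideanSpace ℝ (Fin H))
    (C : Matrix (Fin K) (Fin K) ℝ)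
    (σ : EuclideanSpace ℝ (Fin H) → ℝ)
    (hσ : ∀ z, σ z = κ z z - ∑ k : Fin K, ∑ k' : Fin K, κ z (φ k) * C k k' * κ z (φ k')) :
    Tendsto (fun δ : ℝ => σ (f (δ • x))) atTop (nhds (κ 0 0)) ∧ κ 0 0 = 1 := by
  have hdiag : ∀ z, κ z z = 1 := by
    intro z
    simp [hκ]
  refine ⟨?_, hdiag 0⟩
  have hnorm : ∀ v, Tendsto (fun δ : ℝ => ‖f (δ • x) - v‖) atTop atTop := by
    intro v
    rw [tendsto_atTop]
    intro b
    have h1 : ∀ l, ∀ᶠ δ : ℝ in atTop, b ≤ ‖δ • V l x + a l - v‖ := by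
      intro l
      have hpos : 0 < ‖V l x‖ := norm_pos_iff.mpr (hx l)
      have h2 : Tendsto (fun δ : ℝ => δ * ‖V l x‖) atTop atTop :=
        tendsto_id.atTop_mul_const hpos
      filter_upwards [h2.eventually_ge_atTop (b + ‖v - a l‖), eventually_ge_atTop 0] with δ h3 h4
      have h5 := norm_sub_norm_le (δ • V l x) (v - a l)
      rw [norm_smul, Real.norm_of_nonneg h4] at h5
      have h6 : δ • V l x + a l - v = δ • V l x - (v - a l) := by abel
      rw [h6]
      linarith
    filter_upwards [eventually_all.mpr h1] with δ h
    have hm : δ • x ∈ ⋃ l, Q l := by rw [hcover]; trivial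
    obtain ⟨l, hl⟩ := Set.mem_iUnion.mp hm
    rw [hf l _ hl, map_smul]
    exact h l
  have hk : ∀ v, Tendsto (fun δ : ℝ => κ (f (δ • x)) v) atTop (nhds 0) := by
    intro v
    simp only [hκ]
    refine (tendsto_rpow_neg_atTop hα).comp ?_
    refine tendsto_atTop_add_const_left _ _ ?_
    refine Tendsto.atTop_div_const (by positivity) ?_
    exact (tendsto_pow_atTop (by norm_num)).comp (hnorm v)
  have hs : Tendsto (fun δ : ℝ => ∑ k : Fin K, ∑ k' : Fin K,
      κ (f (δ • x)) (φ k) * C k k' * κ (f (δ • x)) (φ k')) atTop (nhds 0) := by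
    have := tendsto_finsetSum (Finset.univ : Finset (Fin K)) (fun k _ =>
      tendsto_finsetSum (Finset.univ : Finset (Fin K)) (fun k' _ =>
        ((hk (φ k)).mul_const (C k k')).mul (hk (φ k'))))
    simpa using this
  simp only [hσ, hdiag]
  simpa using hs.const_sub 1
end

section
/- Let f : ℝ^D → ℝ^H be piecewise affine with respect to a finite cover of ℝ^D by convex sets Q_1, …, Q_R, with affine pieces f(x) = V_l x + a_l on Q_l, and let x ∈ ℝ^D satisfy V_l x ≠ 0 for every l. Let ℓ > 0, let κ(u, v) = (1 + √3·‖u − v‖/ℓ)·exp(−√3·‖u − v‖/ℓ) be the Matern-3/2 kernel, fix inducing points φ_1, …, φ_K ∈ ℝ^H and a matrix C ∈ ℝ^{K×K}, and define σ(z) = κ(z, z) − Σ_{k,k'=1}^K κ(z, φ_k) C_{k k'} κ(z, φ_{k'}). Then σ(f(δ·x)) → κ(0, 0) = 1 as δ → ∞. -/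
open Filter

/-- Theorem A.1 for the Matern-3/2 kernel: the deep kernel learning predictive
variance reverts to the prior variance `κ 0 0 = 1` along rays `δ • x` as `δ → ∞`. -/
theorem dkl_matern32_variance_tendsto_prior
    (D H R K : ℕ)
    (Q : Fin R → Set (EuclideanSpace ℝ (Fin D)))
    (V : Fin R → (EuclideanSpace ℝ (Fin D) →ₗ[ℝ] EuclideanSpace ℝ (Fin H)))
    (a : Fin R → EuclideanSpace ℝ (Fin H))
    (f : EuclideanSpace ℝ (Fin D) → EuclideanSpace ℝ (Fin H))
    (hconv : ∀ l, Convex ℝ (Q l))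
    (hcover : (⋃ l, Q l) = Set.univ)
    (hf : ∀ l, ∀ x ∈ Q l, f x = V l x + a l)
    (x : EuclideanSpace ℝ (Fin D))
    (hx : ∀ l, V l x ≠ 0)
    (ℓ : ℝ) (hℓ : 0 < ℓ)
    (κ : EuclideanSpace ℝ (Fin H) → EuclideanSpace ℝ (Fin H) → ℝ)
    (hκ : ∀ u v, κ u v =
      (1 + Real.sqrt 3 * ‖u - v‖ / ℓ) * Real.exp (-(Real.sqrt 3 * ‖u - v‖ / ℓ)))
    (φ : Fin K → EuclideanSpace ℝ (Fin H))
    (C : Matrix (Fin K) (Fin K) ℝ)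
    (σ : EuclideanSpace ℝ (Fin H) → ℝ)
    (hσ : ∀ z, σ z = κ z z - ∑ k : Fin K, ∑ k' : Fin K, κ z (φ k) * C k k' * κ z (φ k')) :
    Tendsto (fun δ : ℝ => σ (f (δ • x))) atTop (nhds (κ 0 0)) ∧ κ 0 0 = 1 := by
  have h00 : ∀ z, κ z z = 1 := by
    intro z
    rw [hκ]
    simp
  refine ⟨?_, h00 0⟩
  have hnorm : Tendsto (fun δ : ℝ => ‖f (δ • x)‖) atTop atTop := by
    rw [tendsto_atTop]
    intro M
    have hall : ∀ l, ∀ᶠ δ : ℝ in atTop, M ≤ δ * ‖V l x‖ - ‖a l‖ := by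
      intro l
      have h1 : Tendsto (fun δ : ℝ => δ * ‖V l x‖ - ‖a l‖) atTop atTop :=
        tendsto_atTop_add_const_right _ _
          (tendsto_id.atTop_mul_const (norm_pos_iff.mpr (hx l)))
      exact h1.eventually_ge_atTop M
    filter_upwards [eventually_all.mpr hall, eventually_ge_atTop (0 : ℝ)] with δ hδ h0
    have hm : δ • x ∈ ⋃ l, Q l := by rw [hcover]; trivial
    obtain ⟨l, hl⟩ := Set.mem_iUnion.mp hm
    rw [hf l _ hl, map_smul]
    have h2 := norm_sub_le (δ • V l x + a l) (a l)
    rw [add_sub_cancel_right, norm_smul, Real.norm_of_nonneg h0] at h2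
    linarith [hδ l]
  have hg : Tendsto (fun t : ℝ => (1 + t) * Real.exp (-t)) atTop (nhds 0) := by
    have h1 := Real.tendsto_pow_mul_exp_neg_atTop_nhds_zero 0
    have h2 := Real.tendsto_pow_mul_exp_neg_atTop_nhds_zero 1
    have h3 := h1.add h2
    rw [add_zero] at h3
    refine h3.congr ?_
    intro t
    ring
  have hk : ∀ k, Tendsto (fun δ : ℝ => κ (f (δ • x)) (φ k)) atTop (nhds 0) := by
    intro k
    have h1 : Tendsto (fun δ : ℝ => ‖f (δ • x) - φ k‖) atTop atTop := by
      refine tendsto_atTop_mono (fun δ => norm_sub_norm_le (f (δ • x)) (φ k)) ?_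
      exact tendsto_atTop_add_const_right _ _ hnorm
    have h2 : Tendsto (fun δ : ℝ => Real.sqrt 3 * ‖f (δ • x) - φ k‖ / ℓ) atTop atTop :=
      (h1.const_mul_atTop (by positivity)).atTop_div_const hℓ
    refine (hg.comp h2).congr ?_
    intro δ
    rw [hκ]
    rfl
  have hs : Tendsto (fun δ : ℝ => (1 : ℝ) - ∑ k : Fin K, ∑ k' : Fin K,
      κ (f (δ • x)) (φ k) * C k k' * κ (f (δ • x)) (φ k')) atTop
      (nhds (1 - ∑ k : Fin K, ∑ k' : Fin K, 0 * C k k' * 0)) :=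
    tendsto_const_nhds.sub (tendsto_finsetSum _ fun k _ => tendsto_finsetSum _ fun k' _ =>
      ((hk k).mul_const _).mul (hk k'))
  simp only [mul_zero, Finset.sum_const_zero, sub_zero] at hs
  rw [h00 0]
  refine hs.congr ?_
  intro δ
  rw [hσ, h00]
end

section
/- Let f : ℝ^D → ℝ^H be piecewise affine with respect to a finite cover of ℝ^D by convex sets Q_1, …, Q_R, with affine pieces f(x) = V_l x + a_l on Q_l, and let x ∈ ℝ^D satisfy V_l x ≠ 0 for every l. Let p : ℝ^H → ℝ be Lebesgue integrable and Lipschitz continuous. Then p(f(δ·x)) → 0 as δ → ∞. -/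
open Filter MeasureTheory

theorem natpn_aux {H : ℕ} (p : EuclideanSpace ℝ (Fin H) → ℝ)
    (hint : Integrable p volume) (L : NNReal) (hLip : LipschitzWith L p)
    (u : ℝ → EuclideanSpace ℝ (Fin H)) (hu : Tendsto (fun t => ‖u t‖) atTop atTop) :
    Tendsto (fun t => p (u t)) atTop (nhds 0) := by
  rw [Metric.tendsto_nhds]
  intro ε hε
  set r : ℝ := ε / (2 * (L + 1)) with hr
  have hL : (0:ℝ) ≤ L := L.2
  have hr0 : 0 < r := by positivity
  have hLr : (L:ℝ) * r ≤ ε / 2 := by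
    have : (L + 1 : ℝ) * r = ε / 2 := by rw [hr]; field_simp
    nlinarith
  have h1 : Tendsto (fun t => ∫ z, (Metric.ball (u t) r).indicator (fun z => |p z|) z)
      atTop (nhds (∫ z : EuclideanSpace ℝ (Fin H), (0:ℝ))) := by
    apply tendsto_integral_filter_of_dominated_convergence (fun z => |p z|)
    · exact Eventually.of_forall fun t =>
        (hint.abs.indicator measurableSet_ball).aestronglyMeasurable
    · refine Eventually.of_forall fun t => Eventually.of_forall fun z => ?_
      refine (norm_indicator_le_norm_self _ _).trans ?_
      simp
    · exact hint.abs
    · refine Eventually.of_forall fun z => ?_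
      apply tendsto_const_nhds.congr'
      filter_upwards [hu.eventually_ge_atTop (‖z‖ + r)] with t ht
      rw [Set.indicator_of_notMem]
      intro hz
      rw [Metric.mem_ball, dist_eq_norm] at hz
      have h2 := norm_sub_norm_le (u t) z
      rw [norm_sub_rev] at h2
      linarith
  rw [integral_zero] at h1
  set c := volume.real (Metric.ball (0 : EuclideanSpace ℝ (Fin H)) r) with hc
  have hc0 : 0 < c :=
    ENNReal.toReal_pos (Metric.measure_ball_pos _ _ hr0).ne' measure_ball_lt_top.ne
  filter_upwards [h1.eventually (gt_mem_nhds (show 0 < ε / 2 * c by positivity))] with t ht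
  rw [Real.dist_eq, sub_zero]
  by_contra! hcon
  refine absurd ht (not_lt.2 ?_)
  rw [integral_indicator measurableSet_ball]
  have hcc : volume.real (Metric.ball (u t) r) = c := by
    simp only [hc, Measure.real]
    rw [Measure.addHaar_ball_center]
  calc ε / 2 * c = ∫ z in Metric.ball (u t) r, ε / 2 := by
        rw [setIntegral_const, hcc, smul_eq_mul, mul_comm]
    _ ≤ _ := by
        apply setIntegral_mono_on _ hint.abs.integrableOn measurableSet_ball
        · intro z hz
          have h3 := hLip.dist_le_mul (u t) z
          rw [Real.dist_eq] at h3
          rw [Metric.mem_ball, dist_comm] at hz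
          have h4 : (L:ℝ) * dist (u t) z ≤ L * r := by gcongr
          have h5 := abs_sub_abs_le_abs_sub (p (u t)) (p z)
          linarith
        · exact integrableOn_const measure_ball_lt_top.ne


/-- Theorem A.2: the density (evidence) `p (f (δ • x))` of a Natural Posterior Network
vanishes along rays `δ • x` as `δ → ∞`, for a piecewise affine encoder `f`, an input `x`
with `V l x ≠ 0` for all pieces `l`, and an integrable Lipschitz density `p`. -/
theorem natpn_evidence_tendsto_zero
    (D H R : ℕ)
    (Q : Fin R → Set (EuclideanSpace ℝ (Fin D)))
    (V : Fin R → (EuclideanSpace ℝ (Fin D) →ₗ[ℝ] EuclideanSpace ℝ (Fin H)))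
    (a : Fin R → EuclideanSpace ℝ (Fin H))
    (f : EuclideanSpace ℝ (Fin D) → EuclideanSpace ℝ (Fin H))
    (hconv : ∀ l, Convex ℝ (Q l))
    (hcover : (⋃ l, Q l) = Set.univ)
    (hf : ∀ l, ∀ x ∈ Q l, f x = V l x + a l)
    (x : EuclideanSpace ℝ (Fin D))
    (hx : ∀ l, V l x ≠ 0)
    (p : EuclideanSpace ℝ (Fin H) → ℝ)
    (hint : Integrable p volume)
    (L : NNReal) (hLip : LipschitzWith L p) :
    Tendsto (fun δ : ℝ => p (f (δ • x))) atTop (nhds 0) := by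

  apply natpn_aux p hint L hLip
  rw [tendsto_atTop]
  intro M
  have key : ∀ l, ∀ᶠ δ : ℝ in atTop, M ≤ ‖δ • V l x + a l‖ := by
    intro l
    have hv : 0 < ‖V l x‖ := norm_pos_iff.2 (hx l)
    filter_upwards [(tendsto_id.atTop_mul_const hv).eventually_ge_atTop (M + ‖a l‖),
      eventually_ge_atTop 0] with δ h1 h2
    have h3 := norm_sub_norm_le (δ • V l x) (-a l)
    rw [norm_neg, sub_neg_eq_add, norm_smul, Real.norm_of_nonneg h2] at h3
    simp only [id] at h1
    linarith
  filter_upwards [eventually_all.2 key] with δ hδ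
  have hm : δ • x ∈ ⋃ l, Q l := by rw [hcover]; trivial
  obtain ⟨l, hl⟩ := Set.mem_iUnion.1 hm
  rw [hf l _ hl, map_smul]
  exact hδ l
end

section
/- Let f : ℝ^D → ℝ^H be piecewise affine with respect to a finite cover of ℝ^D by convex sets Q_1, …, Q_R, with affine pieces f(x) = V_l x + a_l on Q_l, and let x ∈ ℝ^D satisfy V_l x ≠ 0 for every l. Let p : ℝ^H → ℝ be Lebesgue integrable, Lipschitz continuous, and nonnegative. Fix a prior evidence n_prior > 0 and prior parameters χ_prior ∈ ℝ^m, a constant c > 0, a bounded function χ : ℝ^H → ℝ^m, and define the evidence n(z) = c·p(z) and the posterior parameters χ_post(z) = (n_prior·χ_prior + n(z)·χ(z)) / (n_prior + n(z)) and n_post(z) = n_prior + n(z). Then χ_post(f(δ·x)) → χ_prior and n_post(f(δ·x)) → n_prior as δ → ∞. -/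
open Filter MeasureTheory

lemma aux_decay {H : ℕ} (p : EuclideanSpace ℝ (Fin H) → ℝ)
    (hint : Integrable p volume)
    (L : NNReal) (hLip : LipschitzWith L p)
    (hp : ∀ z, 0 ≤ p z) (y : ℝ → EuclideanSpace ℝ (Fin H))
    (hy : Tendsto (fun δ => ‖y δ‖) atTop atTop) :
    Tendsto (fun δ => p (y δ)) atTop (nhds 0) := by
  have key : ∀ r : ℝ, Tendsto (fun δ => ∫ w in Metric.ball (y δ) r, p w) atTop (nhds 0) := by
    intro r
    have h : Tendsto (fun δ => ∫ w, (Metric.ball (y δ) r).indicator p w) atTop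
        (nhds (∫ _w : EuclideanSpace ℝ (Fin H), (0:ℝ))) := by
      apply tendsto_integral_filter_of_dominated_convergence p
      · exact Eventually.of_forall fun δ =>
          (hint.indicator Metric.isOpen_ball.measurableSet).aestronglyMeasurable
      · refine Eventually.of_forall fun δ => Eventually.of_forall fun w => ?_
        rw [Real.norm_of_nonneg (Set.indicator_nonneg (fun z _ => hp z) w)]
        exact Set.indicator_le_self' (fun z _ => hp z) w
      · exact hint
      · refine Eventually.of_forall fun w => ?_
        apply tendsto_const_nhds.congr'
        filter_upwards [hy.eventually_gt_atTop (‖w‖ + r)] with δ hδ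
        rw [Set.indicator_of_notMem]
        intro hw
        rw [Metric.mem_ball, dist_comm, dist_eq_norm] at hw
        have := norm_le_norm_add_norm_sub' (y δ) w
        linarith
    simpa [integral_indicator Metric.isOpen_ball.measurableSet] using h
  rw [Metric.tendsto_nhds]
  intro ε hε
  have hL : (0:ℝ) ≤ L := L.2
  set r : ℝ := ε / (2 * (L + 1)) with hr
  have hrpos : 0 < r := by positivity
  have hLr : L * r ≤ ε / 2 := by
    have : (L + 1) * r = ε / 2 := by rw [hr]; field_simp
    nlinarith
  set v : ℝ := volume.real (Metric.ball (0 : EuclideanSpace ℝ (Fin H)) r) with hv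
  have hvpos : 0 < v := by
    rw [hv, Measure.real]
    exact ENNReal.toReal_pos (Metric.measure_ball_pos _ _ hrpos).ne' measure_ball_lt_top.ne
  have hpos : 0 < ε / 2 * v := by positivity
  filter_upwards [(key r).eventually_lt_const hpos] with δ hδ
  rw [Real.dist_eq, sub_zero, abs_of_nonneg (hp _)]
  by_contra hcon
  have hcon := not_lt.mp hcon
  have hvy : volume.real (Metric.ball (y δ) r) = v := by
    rw [hv, Measure.real, Measure.real, Measure.addHaar_ball_center]
  have h1 : ∫ w in Metric.ball (y δ) r, (ε / 2) ≤ ∫ w in Metric.ball (y δ) r, p w := by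
    apply setIntegral_mono_on _ hint.integrableOn Metric.isOpen_ball.measurableSet
    · intro w hw
      have h2 := hLip.dist_le_mul (y δ) w
      rw [Metric.mem_ball, dist_comm] at hw
      rw [Real.dist_eq] at h2
      have h3 := le_abs_self (p (y δ) - p w)
      have h4 : L * dist (y δ) w ≤ L * r := by gcongr
      linarith
    · exact integrableOn_const measure_ball_lt_top.ne
  rw [setIntegral_const, hvy, smul_eq_mul] at h1
  linarith

/-- For inputs far from the training data (along rays `δ • x`), the prior takes over
in the Posterior Network update: the posterior parameters `χ_post` tend to the prior
parameters `χ_prior`, and the posterior evidence `n_post` tends to the prior evidence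
`n_prior`. -/
theorem natpn_posterior_tendsto_prior
    (D H R m : ℕ)
    (Q : Fin R → Set (EuclideanSpace ℝ (Fin D)))
    (V : Fin R → (EuclideanSpace ℝ (Fin D) →ₗ[ℝ] EuclideanSpace ℝ (Fin H)))
    (a : Fin R → EuclideanSpace ℝ (Fin H))
    (f : EuclideanSpace ℝ (Fin D) → EuclideanSpace ℝ (Fin H))
    (hconv : ∀ l, Convex ℝ (Q l))
    (hcover : (⋃ l, Q l) = Set.univ)
    (hf : ∀ l, ∀ x ∈ Q l, f x = V l x + a l)
    (x : EuclideanSpace ℝ (Fin D))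
    (hx : ∀ l, V l x ≠ 0)
    (p : EuclideanSpace ℝ (Fin H) → ℝ)
    (hint : Integrable p volume)
    (L : NNReal) (hLip : LipschitzWith L p)
    (hp : ∀ z, 0 ≤ p z)
    (nprior : ℝ) (hnprior : 0 < nprior)
    (χprior : EuclideanSpace ℝ (Fin m))
    (c : ℝ) (hc : 0 < c)
    (χ : EuclideanSpace ℝ (Fin H) → EuclideanSpace ℝ (Fin m))
    (hχ : ∃ M : ℝ, ∀ z, ‖χ z‖ ≤ M)
    (n : EuclideanSpace ℝ (Fin H) → ℝ)
    (hn : ∀ z, n z = c * p z)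
    (χpost : EuclideanSpace ℝ (Fin H) → EuclideanSpace ℝ (Fin m))
    (hχpost : ∀ z, χpost z = (nprior + n z)⁻¹ • (nprior • χprior + n z • χ z))
    (npost : EuclideanSpace ℝ (Fin H) → ℝ)
    (hnpost : ∀ z, npost z = nprior + n z) :
    Tendsto (fun δ : ℝ => χpost (f (δ • x))) atTop (nhds χprior) ∧
    Tendsto (fun δ : ℝ => npost (f (δ • x))) atTop (nhds nprior) := by
  have hy : Tendsto (fun δ : ℝ => ‖f (δ • x)‖) atTop atTop := by
    have hl : ∀ l, Tendsto (fun δ : ℝ => ‖δ • V l x + a l‖) atTop atTop := by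
      intro l
      have h1 : Tendsto (fun δ : ℝ => δ * ‖V l x‖ - ‖a l‖) atTop atTop :=
        tendsto_atTop_add_const_right _ _
          (tendsto_id.atTop_mul_const (norm_pos_iff.mpr (hx l)))
      refine tendsto_atTop_mono (fun δ => ?_) h1
      have h2 := norm_sub_le (δ • V l x + a l) (a l)
      rw [add_sub_cancel_right, norm_smul, Real.norm_eq_abs] at h2
      have h3 := mul_le_mul_of_nonneg_right (le_abs_self δ) (norm_nonneg (V l x))
      linarith
    rw [tendsto_atTop]
    intro b
    filter_upwards [eventually_all.mpr fun l => (hl l).eventually_ge_atTop b] with δ hδ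
    have hm : δ • x ∈ ⋃ l, Q l := by rw [hcover]; trivial
    obtain ⟨l, hm⟩ := Set.mem_iUnion.mp hm
    rw [hf l _ hm, map_smul]
    exact hδ l
  have hp0 := aux_decay p hint L hLip hp _ hy
  have hn0 : Tendsto (fun δ : ℝ => n (f (δ • x))) atTop (nhds 0) := by
    simpa [hn] using hp0.const_mul c
  have hs : Tendsto (fun δ : ℝ => nprior + n (f (δ • x))) atTop (nhds nprior) := by
    simpa using hn0.const_add nprior
  obtain ⟨M, hM⟩ := hχ
  refine ⟨?_, by simpa [hnpost] using hs⟩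
  have hz : Tendsto (fun δ : ℝ => n (f (δ • x)) • χ (f (δ • x))) atTop (nhds 0) := by
    have hb : Tendsto (fun δ : ℝ => ‖n (f (δ • x))‖ * M) atTop (nhds 0) := by
      simpa using hn0.norm.mul_const M
    refine squeeze_zero_norm (fun δ => ?_) hb
    rw [norm_smul]
    exact mul_le_mul_of_nonneg_left (hM _) (norm_nonneg _)
  have hfin := (hs.inv₀ hnprior.ne').smul (hz.const_add (nprior • χprior))
  rw [add_zero, inv_smul_smul₀ hnprior.ne'] at hfin
  simpa only [hχpost] using hfin
end
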